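/- arXiv:2506.04187 — 2 statements merged into one kernel-verified Lean document; each statement's English description precedes it below -/
import Mathlib

section
/- Let ψ:ℕ→ℝ≥0 be decreasing, and suppose there exist δ>0 and c>0 such that ∑_{q≤Q} ψ(q) ≥ c·(log Q)(log log Q)^{3+δ} for infinitely many Q > 1. Then for every sequence γ=(γ_q)_{q≥1} of real numbers, meas(W(ψ,γ)) = 1. -/
open MeasureTheory

/-- Distance from a real number to the nearest integer. -/
noncomputable def distNearestInt (x : ℝ) : ℝ := |x - round x|

/-- `log x = max {1, ln x}`. -/
noncomputable def log1 (x : ℝ) : ℝ := max 1 (Real.log x)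

/-- The set of `α ∈ [0,1]` with `‖qα - γ_q‖ < ψ q` for infinitely many `q ≥ 1`. -/
def WSet (ψ : ℕ → ℝ) (γ : ℕ → ℝ) : Set ℝ :=
  {α | α ∈ Set.Icc (0:ℝ) 1 ∧
    {q : ℕ | 1 ≤ q ∧ distNearestInt (q * α - γ q) < ψ q}.Infinite}

/-!
On the circle `ℝ/ℤ`, let `A_q` be the set of `x` with `‖q x - γ_q‖ < ψ q`; after scaling `ψ` down
we may assume `ψ ≤ 1/2`, so `A_q` has measure `2 ψ q`. To bound `μ (A_q ∩ A_r)`, pull back along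
`x ↦ gcd(q, r) x` to reduce to coprime `q` and `r`. Then `A_q` is invariant under translation by
`q`-torsion points `t`, while the `q` points `r (x + t)` are `1 / q`-separated, so at most
`2 q ψ r + 1` of them lie in the ball defining `A_r`. Averaging over `t` gives, for general `q` and
`r`, `μ (A_q ∩ A_r) ≤ 2 ψ q * (2 ψ r + gcd(q, r) / q)`, so the covariance of the two events is at
most `2 ψ q * gcd(q, r) / q`.

Since `∑_{r ≤ q} gcd(q, r) / q ≤ d(q)`, which is at most `1 + log Q` on average over `q ≤ Q`,
monotonicity of `ψ` bounds the variance of the number of `q ≤ Q` with `x ∈ A_q` by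
`4 (1 + log Q) ∑_{q ≤ Q} ψ q`. This is `o` of the squared mean along any `Q` with
`(∑_{q ≤ Q} ψ q) / log Q → ∞`, and Chebyshev's inequality finishes the argument.
-/

open ProbabilityTheory Finset Metric Filter
open scoped ENNReal

section Sums

lemma sum_mul_le_sum_mul_of_antitoneOn {f a b : ℕ → ℝ} {Q : ℕ} (hf : AntitoneOn f (Set.Ici 1))
    (hfQ : 0 ≤ f Q)
    (hab : ∀ n ≤ Q, ∑ q ∈ Icc 1 n, a q ≤ ∑ q ∈ Icc 1 n, b q) :
    ∑ q ∈ Icc 1 Q, f q * a q ≤ ∑ q ∈ Icc 1 Q, f q * b q := by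
  let D (n : ℕ) : ℝ := ∑ q ∈ Icc 1 n, (b q - a q)
  have hD {n : ℕ} (hn : n ≤ Q) : 0 ≤ D n := by
    simpa only [D, sum_sub_distrib, sub_nonneg] using hab n hn
  have abel (n : ℕ) (hn : n ≤ Q) : f n * D n ≤ ∑ q ∈ Icc 1 n, f q * (b q - a q) := by
    induction n with
    | zero => simp [D]
    | succ n ih =>
      have hanti : f (n + 1) * D n ≤ f n * D n := by
        rcases Nat.eq_zero_or_pos n with rfl | hpos
        · simp [D]
        · exact mul_le_mul_of_nonneg_right (hf hpos (Nat.le_add_left 1 n) n.le_succ)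
            (hD (by omega))
      calc f (n + 1) * D (n + 1)
          = f (n + 1) * D n + f (n + 1) * (b (n + 1) - a (n + 1)) := by
            simp only [D, sum_Icc_succ_top (Nat.le_add_left 1 n)]; ring
        _ ≤ _ := by
            rw [sum_Icc_succ_top (Nat.le_add_left 1 n)]
            linarith [ih (by omega)]
  have h := (mul_nonneg hfQ (hD le_rfl)).trans (abel Q le_rfl)
  simpa only [mul_sub, sum_sub_distrib, sub_nonneg] using h

lemma sum_Icc_sum_Icc_le_two_mul {F : ℕ → ℕ → ℝ} (hsymm : ∀ q r, F q r = F r q)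
    (hdiag : ∀ q, 0 ≤ F q q) (Q : ℕ) :
    ∑ q ∈ Icc 1 Q, ∑ r ∈ Icc 1 Q, F q r ≤ 2 * ∑ q ∈ Icc 1 Q, ∑ r ∈ Icc 1 q, F q r := by
  induction Q with
  | zero => simp
  | succ Q ih =>
    simp only [sum_Icc_succ_top (Nat.le_add_left 1 Q), sum_add_distrib, hsymm _ (Q + 1)]
    linarith [hdiag (Q + 1)]

lemma sum_gcd_le_mul_card_divisors (n : ℕ) :
    ∑ r ∈ Icc 1 n, n.gcd r ≤ n * #n.divisors := by
  rcases Nat.eq_zero_or_pos n with rfl | hn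
  · simp
  have hmaps : ∀ r ∈ Icc 1 n, n.gcd r ∈ n.divisors := fun r _ ↦
    Nat.mem_divisors.2 ⟨n.gcd_dvd_left r, hn.ne'⟩
  rw [← sum_fiberwise_of_maps_to hmaps, mul_comm, ← smul_eq_mul]
  refine sum_le_card_nsmul _ _ _ fun d hd ↦ ?_
  calc ∑ r ∈ Icc 1 n with n.gcd r = d, n.gcd r
      = #{r ∈ Icc 1 n | n.gcd r = d} * d := sum_const_nat fun r hr ↦ (mem_filter.1 hr).2
    _ ≤ #{r ∈ Ioc 0 n | d ∣ r} * d := by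
      gcongr
      exact monotone_filter_right _ fun r _ hr ↦ hr ▸ n.gcd_dvd_right r
    _ = n := by
      rw [Nat.Ioc_filter_dvd_card_eq_div, Nat.div_mul_cancel (Nat.dvd_of_mem_divisors hd)]

lemma sum_card_divisors_le (N : ℕ) :
    ∑ n ∈ Icc 1 N, (#n.divisors : ℝ) ≤ N * (1 + Real.log N) := by
  have hsum : ∑ n ∈ Icc 1 N, #n.divisors = ∑ n ∈ Icc 1 N, N / n := by
    simpa only [ArithmeticFunction.sigma_zero_apply, ← Icc_add_one_left_eq_Ioc, zero_add] using
      ArithmeticFunction.sum_Ioc_sigma0_eq_sum_div N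
  calc ∑ n ∈ Icc 1 N, (#n.divisors : ℝ)
      = ∑ n ∈ Icc 1 N, ((N / n : ℕ) : ℝ) := by exact_mod_cast hsum
    _ ≤ ∑ n ∈ Icc 1 N, (N : ℝ) * (n : ℝ)⁻¹ := sum_le_sum fun n _ ↦ Nat.cast_div_le
    _ = N * (harmonic N : ℝ) := by
      rw [harmonic_eq_sum_Icc, Rat.cast_sum, mul_sum]
      simp only [Rat.cast_inv, Rat.cast_natCast]
    _ ≤ N * (1 + Real.log N) := by
      gcongr
      exact harmonic_le_one_add_log N

lemma sum_mul_sum_gcd_div_le {f : ℕ → ℝ} (hf : AntitoneOn f (Set.Ici 1)) (hf0 : ∀ q, 0 ≤ f q)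
    (Q : ℕ) :
    ∑ q ∈ Icc 1 Q, f q * ∑ r ∈ Icc 1 q, (q.gcd r : ℝ) / q
      ≤ (1 + Real.log Q) * ∑ q ∈ Icc 1 Q, f q := by
  have hdiv (q : ℕ) (hq : q ∈ Icc 1 Q) : ∑ r ∈ Icc 1 q, (q.gcd r : ℝ) / q ≤ #q.divisors := by
    rw [← sum_div, div_le_iff₀' (by exact_mod_cast (mem_Icc.1 hq).1)]
    exact_mod_cast sum_gcd_le_mul_card_divisors q
  have hpartial (n : ℕ) (hn : n ≤ Q) :
      ∑ q ∈ Icc 1 n, (#q.divisors : ℝ) ≤ ∑ _q ∈ Icc 1 n, (1 + Real.log Q) := by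
    rcases Nat.eq_zero_or_pos n with rfl | hpos
    · simp
    refine (sum_card_divisors_le n).trans ?_
    rw [sum_const, Nat.card_Icc, Nat.add_sub_cancel, nsmul_eq_mul]
    gcongr
  calc ∑ q ∈ Icc 1 Q, f q * ∑ r ∈ Icc 1 q, (q.gcd r : ℝ) / q
      ≤ ∑ q ∈ Icc 1 Q, f q * #q.divisors :=
        sum_le_sum fun q hq ↦ mul_le_mul_of_nonneg_left (hdiv q hq) (hf0 q)
    _ ≤ ∑ q ∈ Icc 1 Q, f q * (1 + Real.log Q) :=
        sum_mul_le_sum_mul_of_antitoneOn hf (hf0 Q) hpartial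
    _ = (1 + Real.log Q) * ∑ q ∈ Icc 1 Q, f q := by rw [← sum_mul, mul_comm]

end Sums

section Probability

variable {Ω : Type*} [MeasurableSpace Ω] {μ : Measure Ω}

lemma memLp_indicator_one [IsFiniteMeasure μ] {A : Set Ω} (hA : MeasurableSet A) (p : ℝ≥0∞) :
    MemLp (A.indicator (1 : Ω → ℝ)) p μ :=
  (memLp_const (1 : ℝ)).indicator hA

variable [IsProbabilityMeasure μ]

lemma covariance_indicator_one {A B : Set Ω} (hA : MeasurableSet A) (hB : MeasurableSet B) :
    cov[A.indicator (1 : Ω → ℝ), B.indicator 1; μ] = μ.real (A ∩ B) - μ.real A * μ.real B := by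
  rw [covariance_eq_sub (memLp_indicator_one hA 2) (memLp_indicator_one hB 2),
    ← Set.inter_indicator_one, integral_indicator_one hA, integral_indicator_one hB,
    integral_indicator_one (hA.inter hB)]

lemma measure_encard_le_le_variance_div_sq {ι : Type*} {A : ι → Set Ω}
    (hA : ∀ i, MeasurableSet (A i)) (s : Finset ι) {B : ℕ} (hB : B < ∑ i ∈ s, μ.real (A i)) :
    μ {ω | {i | ω ∈ A i}.encard ≤ B} ≤ ENNReal.ofReal
      (Var[∑ i ∈ s, (A i).indicator 1; μ] / (∑ i ∈ s, μ.real (A i) - B) ^ 2) := by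
  have hL2 : MemLp (∑ i ∈ s, (A i).indicator (1 : Ω → ℝ)) 2 μ :=
    memLp_finsetSum' s fun i _ ↦ memLp_indicator_one (hA i) 2
  have hmean : μ[∑ i ∈ s, (A i).indicator (1 : Ω → ℝ)] = ∑ i ∈ s, μ.real (A i) := by
    simp only [Finset.sum_apply]
    rw [integral_finsetSum _ fun i _ ↦ (memLp_indicator_one (hA i) 1).integrable le_rfl]
    exact sum_congr rfl fun i _ ↦ integral_indicator_one (hA i)
  refine le_trans (measure_mono fun ω hω ↦ ?_) (meas_ge_le_variance_div_sq hL2 (sub_pos.2 hB))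
  have hcount : (∑ i ∈ s, (A i).indicator (1 : Ω → ℝ)) ω ≤ B := by
    classical
    have hcard : #{i ∈ s | ω ∈ A i} ≤ B := by
      rw [← Nat.cast_le (α := ℕ∞), ← Set.encard_coe_eq_coe_finsetCard]
      refine (Set.encard_le_encard fun i hi ↦ ?_).trans hω
      exact (mem_filter.1 hi).2
    simpa [Set.indicator_apply] using hcard
  rw [Set.mem_ofPred_eq, hmean, abs_sub_comm]
  exact (sub_le_sub_left hcount _).trans (le_abs_self _)

theorem ae_infinite_of_variance_le {ι : Type*} {A : ι → Set Ω} (hA : ∀ i, MeasurableSet (A i))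
    (h : ∀ C : ℝ, 0 < C → ∃ s : Finset ι, C ≤ ∑ i ∈ s, μ.real (A i) ∧
      C * Var[∑ i ∈ s, (A i).indicator 1; μ] ≤ (∑ i ∈ s, μ.real (A i)) ^ 2) :
    ∀ᵐ ω ∂μ, {i | ω ∈ A i}.Infinite := by
  have hnull (B : ℕ) : μ {ω | {i | ω ∈ A i}.encard ≤ B} = 0 := by
    refine le_antisymm (ENNReal.le_of_forall_pos_le_add fun ε hε _ ↦ ?_) zero_le
    obtain ⟨s, hmean, hvar⟩ := h (max (2 * (B + 1)) (4 / ε)) (by positivity)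
    set E := ∑ i ∈ s, μ.real (A i)
    set V := Var[∑ i ∈ s, (A i).indicator 1; μ]
    have hBE : 2 * ((B : ℝ) + 1) ≤ E := (le_max_left _ _).trans hmean
    have hVε : 4 / ε * V ≤ E ^ 2 :=
      (mul_le_mul_of_nonneg_right (le_max_right _ _) (variance_nonneg _ _)).trans hvar
    have hB0 : (0 : ℝ) ≤ B := B.cast_nonneg
    rw [zero_add, ← ENNReal.ofReal_coe_nnreal]
    refine (measure_encard_le_le_variance_div_sq hA s (by linarith)).trans
      (ENNReal.ofReal_le_ofReal ?_)
    have hε' : (0 : ℝ) < ε := hε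
    rw [div_le_iff₀ (pow_pos (by linarith) 2)]
    rw [div_mul_eq_mul_div, div_le_iff₀ hε'] at hVε
    have hhalf : E ^ 2 ≤ 4 * (E - B) ^ 2 := by nlinarith
    nlinarith
  filter_upwards [ae_all_iff.2 fun B ↦ measure_eq_zero_iff_ae_notMem.1 (hnull B)] with ω hω hfin
  exact hω hfin.toFinset.card hfin.encard_eq_coe_toFinset_card.le

end Probability


open scoped Classical in
lemma card_mul_measure_inter_le {G : Type*} [AddGroup G] [MeasurableSpace G] [MeasurableAdd G]
    (μ : Measure G) [μ.IsAddRightInvariant] {ι : Type*} {s : Finset ι} {u : ι → G} {A B : Set G}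
    (hB : MeasurableSet B) (hinv : ∀ i ∈ s, (· + u i) ⁻¹' A = A)
    {M : ℝ≥0∞} (hM : ∀ x, (#{i ∈ s | x + u i ∈ B} : ℝ≥0∞) ≤ M) :
    #s * μ (A ∩ B) ≤ M * μ A := by
  have hBi (i : ι) : MeasurableSet ((· + u i) ⁻¹' B) := measurable_add_const (u i) hB
  have htranslate (i : ι) (hi : i ∈ s) :
      μ (A ∩ B) = ∫⁻ x in A, ((· + u i) ⁻¹' B).indicator 1 x ∂μ := by
    rw [lintegral_indicator_one (hBi i), Measure.restrict_apply (hBi i), Set.inter_comm,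
      ← measure_preimage_add_right μ (u i), Set.preimage_inter, hinv i hi, Set.inter_comm]
  calc #s * μ (A ∩ B) = ∑ i ∈ s, ∫⁻ x in A, ((· + u i) ⁻¹' B).indicator 1 x ∂μ := by
        rw [← nsmul_eq_mul, ← sum_const, sum_congr rfl htranslate]
    _ = ∫⁻ x in A, #{i ∈ s | x + u i ∈ B} ∂μ := by
        rw [← lintegral_finsetSum s fun i _ ↦ measurable_one.indicator (hBi i)]
        simp [Set.indicator_apply]
    _ ≤ ∫⁻ _ in A, M ∂μ := lintegral_mono hM
    _ = M * μ A := by rw [setLIntegral_const]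

section Circle

instance isProbabilityMeasure_volume_unitAddCircle :
    IsProbabilityMeasure (volume : Measure UnitAddCircle) :=
  ⟨UnitAddCircle.measure_univ⟩

lemma volume_real_ball {c : UnitAddCircle} {w : ℝ} (hw : 0 ≤ w) :
    volume.real (ball c w) = min 1 (2 * w) := by
  rw [← measureReal_congr AddCircle.closedBall_ae_eq_ball, measureReal_def,
    AddCircle.volume_closedBall, ENNReal.toReal_ofReal (by positivity)]

lemma measurePreserving_nsmul {n : ℕ} (hn : n ≠ 0) :
    MeasurePreserving (fun x : UnitAddCircle ↦ n • x) := by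
  simpa only [natCast_zsmul] using
    Measure.measurePreserving_zsmul (volume : Measure UnitAddCircle) (Nat.cast_ne_zero.2 hn)

lemma card_mul_le_of_pairwise_le_dist {ι : Type*} {s : Finset ι} {p : ι → UnitAddCircle}
    {c : UnitAddCircle} {w ε : ℝ} (hw : 0 ≤ w) (hε : 0 ≤ ε) (hε1 : ε ≤ 1)
    (hp : ∀ i ∈ s, p i ∈ ball c w) (hsep : (s : Set ι).Pairwise fun i j ↦ ε ≤ dist (p i) (p j)) :
    #s * ε ≤ 2 * w + ε := by
  have hdisj : (s : Set ι).PairwiseDisjoint fun i ↦ ball (p i) (ε / 2) := fun i hi j hj hij ↦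
    ball_disjoint_ball (by linarith [hsep hi hj hij])
  have hsub : ⋃ i ∈ s, ball (p i) (ε / 2) ⊆ ball c (w + ε / 2) :=
    Set.iUnion₂_subset fun i hi ↦ ball_subset_ball' (by linarith [mem_ball.1 (hp i hi)])
  calc #s * ε = ∑ i ∈ s, volume.real (ball (p i) (ε / 2)) := by
        simp only [volume_real_ball (div_nonneg hε zero_le_two), mul_div_cancel₀ ε two_ne_zero,
          min_eq_right hε1, sum_const, nsmul_eq_mul]
    _ = volume.real (⋃ i ∈ s, ball (p i) (ε / 2)) :=
        (measureReal_biUnion_finset hdisj fun _ _ ↦ measurableSet_ball).symm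
    _ ≤ volume.real (ball c (w + ε / 2)) := measureReal_mono hsub
    _ ≤ 2 * (w + ε / 2) := by
        rw [volume_real_ball (by positivity)]
        exact min_le_right _ _
    _ = 2 * w + ε := by ring

lemma inv_le_norm_of_nsmul_eq_zero {z : UnitAddCircle} {n : ℕ} (hn : 0 < n) (hz : n • z = 0)
    (hz0 : z ≠ 0) : (n : ℝ)⁻¹ ≤ ‖z‖ := by
  have hfin : IsOfFinAddOrder z := isOfFinAddOrder_iff_nsmul_eq_zero.2 ⟨n, hn, hz⟩
  rw [inv_le_iff_one_le_mul₀' (by exact_mod_cast hn)]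
  calc (1 : ℝ) ≤ addOrderOf z • ‖z‖ := AddCircle.le_add_order_smul_norm_of_isOfFinAddOrder hfin hz0
    _ ≤ n * ‖z‖ := by
      rw [nsmul_eq_mul]
      gcongr
      exact Nat.le_of_dvd hn (addOrderOf_dvd_of_nsmul_eq_zero hz)

open scoped Classical in
lemma card_filter_add_nsmul_mem_ball_le {z : UnitAddCircle} (hz : IsOfFinAddOrder z)
    (x c : UnitAddCircle) {w : ℝ} (hw : 0 ≤ w) :
    (#{a ∈ range (addOrderOf z) | x + a • z ∈ ball c w} : ℝ) ≤ 2 * w * addOrderOf z + 1 := by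
  set n := addOrderOf z
  have hn : 0 < n := hz.addOrderOf_pos
  have hn' : (0 : ℝ) < n := Nat.cast_pos.2 hn
  have hsep (a : ℕ) (ha : a < n) (b : ℕ) (hb : b < n) (hab : a ≠ b) :
      (n : ℝ)⁻¹ ≤ dist (x + a • z) (x + b • z) := by
    rw [dist_add_left, dist_eq_norm]
    refine inv_le_norm_of_nsmul_eq_zero hn ?_ ?_
    · rw [smul_sub, smul_comm n a, smul_comm n b, addOrderOf_nsmul_eq_zero, smul_zero, smul_zero,
        sub_zero]
    · exact sub_ne_zero.2 fun h ↦ hab (nsmul_injOn_Iio_addOrderOf ha hb h)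
  have hpack := card_mul_le_of_pairwise_le_dist (s := {a ∈ range n | x + a • z ∈ ball c w}) hw
    (inv_nonneg.2 hn'.le) (inv_le_one_of_one_le₀ (Nat.one_le_cast.2 hn))
    (fun a ha ↦ (mem_filter.1 ha).2) fun a ha b hb ↦
      hsep a (mem_range.1 (mem_filter.1 ha).1) b (mem_range.1 (mem_filter.1 hb).1)
  calc _ = _ * (n : ℝ)⁻¹ * n := (inv_mul_cancel_right₀ hn'.ne' _).symm
    _ ≤ (2 * w + (n : ℝ)⁻¹) * n := by gcongr
    _ = 2 * w * n + 1 := by rw [add_mul, inv_mul_cancel₀ hn'.ne']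

lemma volume_real_preimage_nsmul_inter_le_of_coprime {q r : ℕ} (hq : q ≠ 0) (hqr : q.Coprime r)
    {S : Set UnitAddCircle} (hS : MeasurableSet S) (c : UnitAddCircle) {w : ℝ} (hw : 0 ≤ w) :
    volume.real ((q • ·) ⁻¹' S ∩ (r • ·) ⁻¹' ball c w) ≤
      volume.real S * (2 * w + (q : ℝ)⁻¹) := by
  obtain ⟨y, hy⟩ : ∃ y : UnitAddCircle, addOrderOf y = q :=
    ⟨_, AddCircle.addOrderOf_period_div (Nat.pos_of_ne_zero hq)⟩
  have hry : addOrderOf (r • y) = q := by rw [Nat.Coprime.addOrderOf_nsmul (hy ▸ hqr), hy]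
  have hinv (a : ℕ) : (· + a • y) ⁻¹' ((q • ·) ⁻¹' S) = (q • ·) ⁻¹' S := by
    have hqy : q • a • y = 0 := by
      rw [smul_comm, ← hy, addOrderOf_nsmul_eq_zero, smul_zero]
    ext x
    simp only [Set.mem_preimage, smul_add, hqy, add_zero]
  classical
  have hcount (x : UnitAddCircle) : (#{a ∈ range q | x + a • y ∈ (r • ·) ⁻¹' ball c w} : ℝ≥0∞) ≤
      ENNReal.ofReal (2 * w * q + 1) := by
    have h := card_filter_add_nsmul_mem_ball_le (addOrderOf_pos_iff.1 (hry ▸ Nat.pos_of_ne_zero hq))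
      (r • x) c hw
    rw [hry] at h
    simpa only [Set.mem_preimage, smul_add, smul_comm r _ y, ENNReal.ofReal_natCast] using
      ENNReal.ofReal_le_ofReal h
  have hmeas := card_mul_measure_inter_le volume
    (measurable_const_smul r measurableSet_ball) (fun a _ ↦ hinv a) hcount
  rw [(measurePreserving_nsmul hq).measure_preimage hS.nullMeasurableSet, card_range] at hmeas
  have hreal := ENNReal.toReal_mono (by finiteness) hmeas
  have hq' : (0 : ℝ) < q := Nat.cast_pos.2 (Nat.pos_of_ne_zero hq)
  rw [ENNReal.toReal_mul, ENNReal.toReal_mul, ENNReal.toReal_natCast,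
    ENNReal.toReal_ofReal (by positivity), ← le_div_iff₀' hq'] at hreal
  refine hreal.trans_eq ?_
  rw [measureReal_def]
  field_simp

lemma volume_real_preimage_nsmul_inter_le {q : ℕ} (hq : q ≠ 0) (r : ℕ)
    {S : Set UnitAddCircle} (hS : MeasurableSet S) (c : UnitAddCircle) {w : ℝ} (hw : 0 ≤ w) :
    volume.real ((q • ·) ⁻¹' S ∩ (r • ·) ⁻¹' ball c w) ≤
      volume.real S * (2 * w + q.gcd r / q) := by
  obtain ⟨q', r', hcop, hq', hr'⟩ := Nat.exists_coprime q r
  set g := q.gcd r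
  have hg : g ≠ 0 := Nat.gcd_ne_zero_left hq
  have hq'0 : q' ≠ 0 := by rintro rfl; simp_all
  have hfactor : (q • ·) ⁻¹' S ∩ (r • ·) ⁻¹' ball c w =
      (g • · : UnitAddCircle → UnitAddCircle) ⁻¹' ((q' • ·) ⁻¹' S ∩ (r' • ·) ⁻¹' ball c w) := by
    ext x
    simp only [Set.mem_inter_iff, Set.mem_preimage, smul_smul, ← hq', ← hr']
  have hgq : (g : ℝ) / q = (q' : ℝ)⁻¹ := by
    rw [hq']
    push_cast
    field_simp
  rw [hfactor, hgq, (measurePreserving_nsmul hg).measureReal_preimage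
    ((measurable_const_smul q' hS).inter
      (measurable_const_smul r' measurableSet_ball)).nullMeasurableSet]
  exact volume_real_preimage_nsmul_inter_le_of_coprime hq'0 hcop hS c hw

end Circle

section Approximation

/-- The points `x` of the circle with `‖q x - c‖ < w`. -/
def approxSet (q : ℕ) (c : UnitAddCircle) (w : ℝ) : Set UnitAddCircle :=
  (q • ·) ⁻¹' ball c w

lemma measurableSet_approxSet (q : ℕ) (c : UnitAddCircle) (w : ℝ) :
    MeasurableSet (approxSet q c w) :=
  measurable_const_smul q measurableSet_ball

lemma volume_real_approxSet {q : ℕ} (hq : q ≠ 0) (c : UnitAddCircle) {w : ℝ} (hw : 0 ≤ w)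
    (hw' : w ≤ 1 / 2) : volume.real (approxSet q c w) = 2 * w := by
  rw [approxSet, (measurePreserving_nsmul hq).measureReal_preimage
    measurableSet_ball.nullMeasurableSet, volume_real_ball hw, min_eq_right (by linarith)]

lemma covariance_approxSet_le {q r : ℕ} (hq : q ≠ 0) (hr : r ≠ 0) (c d : UnitAddCircle) {w v : ℝ}
    (hw : 0 ≤ w) (hw' : w ≤ 1 / 2) (hv : 0 ≤ v) (hv' : v ≤ 1 / 2) :
    cov[(approxSet q c w).indicator 1, (approxSet r d v).indicator 1; volume] ≤
      2 * w * (q.gcd r / q) := by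
  have hinter := volume_real_preimage_nsmul_inter_le hq r (S := ball c w) measurableSet_ball d hv
  rw [volume_real_ball hw, min_eq_right (by linarith)] at hinter
  rw [covariance_indicator_one (measurableSet_approxSet q c w) (measurableSet_approxSet r d v),
    volume_real_approxSet hq c hw hw', volume_real_approxSet hr d hv hv', sub_le_iff_le_add']
  exact hinter.trans_eq (mul_add _ _ _)

lemma variance_sum_approxSet_le (c : ℕ → UnitAddCircle) {f : ℕ → ℝ}
    (hf : AntitoneOn f (Set.Ici 1)) (hf0 : ∀ q, 0 ≤ f q) (hf' : ∀ q ≥ 1, f q ≤ 1 / 2) (Q : ℕ) :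
    Var[∑ q ∈ Icc 1 Q, (approxSet q (c q) (f q)).indicator 1; volume] ≤
      4 * (1 + Real.log Q) * ∑ q ∈ Icc 1 Q, f q := by
  let X (q : ℕ) : UnitAddCircle → ℝ := (approxSet q (c q) (f q)).indicator 1
  have hcov {q r : ℕ} (hq : q ∈ Icc 1 Q) (hr : r ∈ Icc 1 q) :
      cov[X q, X r; volume] ≤ 2 * f q * (q.gcd r / q) := by
    rw [mem_Icc] at hq hr
    exact covariance_approxSet_le (by omega) (by omega) _ _ (hf0 q) (hf' q hq.1) (hf0 r)
      (hf' r hr.1)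
  have hmeas (q : ℕ) : AEMeasurable (X q) :=
    (measurable_one.indicator (measurableSet_approxSet q _ _)).aemeasurable
  calc Var[∑ q ∈ Icc 1 Q, X q; volume]
      = ∑ q ∈ Icc 1 Q, ∑ r ∈ Icc 1 Q, cov[X q, X r; volume] :=
        variance_sum' fun q _ ↦ memLp_indicator_one (measurableSet_approxSet q _ _) 2
    _ ≤ 2 * ∑ q ∈ Icc 1 Q, ∑ r ∈ Icc 1 q, cov[X q, X r; volume] :=
        sum_Icc_sum_Icc_le_two_mul (fun q r ↦ covariance_comm (X q) (X r))
          (fun q ↦ covariance_self (hmeas q) ▸ variance_nonneg _ _) Q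
    _ ≤ 2 * ∑ q ∈ Icc 1 Q, ∑ r ∈ Icc 1 q, 2 * f q * (q.gcd r / q) := by
        gcongr with q hq r hr
        exact hcov hq hr
    _ = 4 * ∑ q ∈ Icc 1 Q, f q * ∑ r ∈ Icc 1 q, (q.gcd r : ℝ) / q := by
        simp only [← mul_sum, mul_assoc]; ring
    _ ≤ 4 * ((1 + Real.log Q) * ∑ q ∈ Icc 1 Q, f q) := by
        gcongr
        exact sum_mul_sum_gcd_div_le hf hf0 Q
    _ = 4 * (1 + Real.log Q) * ∑ q ∈ Icc 1 Q, f q := by ring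

theorem ae_infinite_mem_approxSet_of_le_half (c : ℕ → UnitAddCircle) {f : ℕ → ℝ}
    (hf : AntitoneOn f (Set.Ici 1)) (hf0 : ∀ q, 0 ≤ f q) (hf' : ∀ q ≥ 1, f q ≤ 1 / 2)
    (hdiv : ∀ C : ℝ, ∃ Q : ℕ, C * (1 + Real.log Q) ≤ ∑ q ∈ Icc 1 Q, f q) :
    ∀ᵐ x, {q | x ∈ approxSet q (c q) (f q)}.Infinite := by
  refine ae_infinite_of_variance_le (fun q ↦ measurableSet_approxSet q _ _) fun C hC ↦ ?_
  obtain ⟨Q, hQ⟩ := hdiv C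
  set P := ∑ q ∈ Icc 1 Q, f q
  have hmean : ∑ q ∈ Icc 1 Q, volume.real (approxSet q (c q) (f q)) = 2 * P := by
    rw [mul_sum]
    refine sum_congr rfl fun q hq ↦ ?_
    have hq1 := (mem_Icc.1 hq).1
    exact volume_real_approxSet (by omega) _ (hf0 q) (hf' q hq1)
  have hlog : 0 ≤ Real.log Q := Real.log_natCast_nonneg Q
  have hP : 0 ≤ P := sum_nonneg fun q _ ↦ hf0 q
  refine ⟨Icc 1 Q, ?_, ?_⟩ <;> rw [hmean]
  · nlinarith
  · calc C * Var[∑ q ∈ Icc 1 Q, (approxSet q (c q) (f q)).indicator 1; volume]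
        ≤ C * (4 * (1 + Real.log Q) * P) := by
          gcongr
          exact variance_sum_approxSet_le c hf hf0 hf' Q
      _ = 4 * P * (C * (1 + Real.log Q)) := by ring
      _ ≤ 4 * P * P := by gcongr
      _ = (2 * P) ^ 2 := by ring

theorem ae_infinite_mem_approxSet (c : ℕ → UnitAddCircle) {f : ℕ → ℝ}
    (hf : AntitoneOn f (Set.Ici 1)) (hf0 : ∀ q, 0 ≤ f q)
    (hdiv : ∀ C : ℝ, ∃ Q : ℕ, C * (1 + Real.log Q) ≤ ∑ q ∈ Icc 1 Q, f q) :
    ∀ᵐ x, {q | x ∈ approxSet q (c q) (f q)}.Infinite := by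
  have hK1 : 1 ≤ 2 * f 1 + 1 := by linarith [hf0 1]
  set K := 2 * f 1 + 1
  have hK0 : 0 < K := by linarith
  have hsmall := ae_infinite_mem_approxSet_of_le_half c (f := fun q ↦ f q / K)
    (fun q hq r hr hqr ↦ by dsimp only; gcongr; exact hf hq hr hqr)
    (fun q ↦ div_nonneg (hf0 q) hK0.le)
    (fun q hq ↦ by rw [div_le_iff₀ hK0]; linarith [hf Set.self_mem_Ici hq hq])
    (fun C ↦ by
      obtain ⟨Q, hQ⟩ := hdiv (K * C)
      exact ⟨Q, by rwa [← sum_div, le_div_iff₀' hK0, ← mul_assoc]⟩)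
  filter_upwards [hsmall] with x hx
  exact hx.mono fun q hq ↦ ball_subset_ball (div_le_self (hf0 q) hK1) hq

end Approximation

section Transfer

lemma one_add_log_le_two_mul_log1 (x : ℝ) : 1 + Real.log x ≤ 2 * log1 x := by
  rw [log1]
  linarith [le_max_left 1 (Real.log x), le_max_right 1 (Real.log x)]

lemma distNearestInt_lt_iff_mem_approxSet (q : ℕ) (x y w : ℝ) :
    distNearestInt (q * x - y) < w ↔ (x : UnitAddCircle) ∈ approxSet q y w := by
  rw [approxSet, Set.mem_preimage, mem_ball_iff_norm, ← AddCircle.coe_nsmul, ← AddCircle.coe_sub,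
    UnitAddCircle.norm_eq, nsmul_eq_mul, distNearestInt]

lemma mem_WSet_of_infinite {ψ γ : ℕ → ℝ} {x : ℝ} (hx : x ∈ Set.Icc 0 1)
    (h : {q | (x : UnitAddCircle) ∈ approxSet q (γ q) (ψ q)}.Infinite) : x ∈ WSet ψ γ := by
  refine ⟨hx, (h.sdiff (Set.finite_singleton 0)).mono ?_⟩
  rintro q ⟨hq, hq0⟩
  exact ⟨Nat.one_le_iff_ne_zero.2 hq0, (distNearestInt_lt_iff_mem_approxSet q x (γ q) (ψ q)).2 hq⟩

lemma volume_WSet_eq_one_of_ae {ψ γ : ℕ → ℝ}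
    (h : ∀ᵐ x : UnitAddCircle, {q | x ∈ approxSet q (γ q) (ψ q)}.Infinite) :
    volume (WSet ψ γ) = 1 := by
  have hIoc : ∀ᵐ x : ℝ, x ∈ Set.Ioc (0 : ℝ) 1 → x ∈ WSet ψ γ := by
    have hmk := (UnitAddCircle.measurePreserving_mk 0).quasiMeasurePreserving.ae h
    rw [zero_add, ae_restrict_iff' measurableSet_Ioc] at hmk
    filter_upwards [hmk] with x hx hmem
    exact mem_WSet_of_infinite (Set.Ioc_subset_Icc_self hmem) (hx hmem)
  refine le_antisymm ?_ ?_
  · calc volume (WSet ψ γ) ≤ volume (Set.Icc (0 : ℝ) 1) := measure_mono fun x hx ↦ hx.1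
      _ = 1 := by simp
  · calc 1 = volume (Set.Ioc (0 : ℝ) 1) := by simp
      _ ≤ volume (WSet ψ γ) := measure_mono_ae hIoc

end Transfer

lemma tendsto_log1_log1 : Tendsto (fun x ↦ log1 (log1 x)) atTop atTop := by
  have hlog1 : Tendsto log1 atTop atTop :=
    tendsto_atTop_mono (fun x ↦ le_max_right 1 (Real.log x)) Real.tendsto_log_atTop
  exact hlog1.comp hlog1

lemma exists_mul_log1_le_of_frequently {ψ : ℕ → ℝ} {c p : ℝ} (hc : 0 < c) (hp : 0 < p)
    (h : ∃ᶠ Q : ℕ in atTop, c * log1 Q * log1 (log1 Q) ^ p ≤ ∑ q ∈ Icc 1 Q, ψ q) (C : ℝ) :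
    ∃ Q : ℕ, C * log1 Q ≤ ∑ q ∈ Icc 1 Q, ψ q := by
  have hlarge : ∀ᶠ Q : ℕ in atTop, C / c ≤ log1 (log1 Q) ^ p :=
    ((tendsto_rpow_atTop hp).comp (tendsto_log1_log1.comp
      tendsto_natCast_atTop_atTop)).eventually_ge_atTop (C / c)
  obtain ⟨Q, hQ, hCQ⟩ := (h.and_eventually hlarge).exists
  rw [div_le_iff₀' hc] at hCQ
  refine ⟨Q, le_trans ?_ hQ⟩
  have hlog : 0 ≤ log1 Q := zero_le_one.trans (le_max_left _ _)
  calc C * log1 Q ≤ c * log1 (log1 Q) ^ p * log1 Q := by gcongr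
    _ = c * log1 Q * log1 (log1 Q) ^ p := by ring

theorem stmt5_general (ψ : ℕ → ℝ) (hψ0 : ∀ q, 0 ≤ ψ q)
    (hψdec : ∀ q r : ℕ, 1 ≤ q → q ≤ r → ψ r ≤ ψ q)
    (hψ : ∀ C : ℝ, ∃ Q : ℕ, C * log1 Q ≤ ∑ q ∈ Finset.Icc 1 Q, ψ q)
    (γ : ℕ → ℝ) :
    volume (WSet ψ γ) = 1 := by
  have hdiv (C : ℝ) : ∃ Q : ℕ, C * (1 + Real.log Q) ≤ ∑ q ∈ Icc 1 Q, ψ q := by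
    obtain ⟨Q, hQ⟩ := hψ (2 * |C|)
    refine ⟨Q, le_trans ?_ hQ⟩
    calc C * (1 + Real.log Q) ≤ |C| * (1 + Real.log Q) :=
          mul_le_mul_of_nonneg_right (le_abs_self C)
            (add_nonneg zero_le_one (Real.log_natCast_nonneg Q))
      _ ≤ |C| * (2 * log1 Q) := by
          gcongr
          exact one_add_log_le_two_mul_log1 Q
      _ = 2 * |C| * log1 Q := by ring
  exact volume_WSet_eq_one_of_ae <|
    ae_infinite_mem_approxSet _ (fun q hq r _ hqr ↦ hψdec q r hq hqr) hψ0 hdiv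

theorem stmt5 (ψ : ℕ → ℝ) (hψ0 : ∀ q, 0 ≤ ψ q)
    (hψdec : ∀ q r : ℕ, 1 ≤ q → q ≤ r → ψ r ≤ ψ q)
    (hfast : ∃ δ > (0:ℝ), ∃ c > (0:ℝ), ∀ N : ℕ, ∃ Q : ℕ, N ≤ Q ∧ 1 < Q ∧
      c * log1 Q * log1 (log1 Q) ^ ((3:ℝ) + δ) ≤ ∑ q ∈ Finset.Icc 1 Q, ψ q)
    (γ : ℕ → ℝ) :
    volume (WSet ψ γ) = 1 := by
  obtain ⟨δ, hδ, c, hc, h⟩ := hfast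
  exact stmt5_general ψ hψ0 hψdec (exists_mul_log1_le_of_frequently hc (by linarith)
    (frequently_atTop.2 fun N ↦ (h N).imp fun Q hQ ↦ ⟨hQ.1, hQ.2.2⟩)) γ
end

section
/- Let γ=(γ_q)_{q≥1} be a sequence of real numbers and let ψ:ℕ→[0,1/2]. For each q∈ℕ define A_q = {α ∈ [0,1] : ‖qα − γ_q‖ < ψ(q)}. Then for all integers 1 ≤ r < q, meas(A_q ∩ A_r) ≤ 2·meas(A_q)·meas(A_r) + (gcd(q,r)/q)·meas(A_q). -/
open MeasureTheory ENNReal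

/-!
On the circle `ℝ / ℤ` the set `A q` is the preimage under `x ↦ q • x` of an arc of measure
`min 1 (2 * ψ q)`, and `x ↦ q • x` preserves measure. Multiplication by `d = gcd q r` preserves
measure as well, so one may replace `(q, r)` by the coprime pair `(q / d, r / d)` without changing
any of the three measures.

In the coprime case, `A q` is invariant under the translations `x ↦ x + j / q`, so the measure of
`A q ∩ A r` is the integral over `A q` of the proportion of `j` with `x + j / q ∈ A r`. As `r` is
invertible modulo `q`, the points `r • (x + j / q)` form a coset of the `q`-torsion. They are
`1 / q`-separated, so by packing at most `q * |I| + 1` of them lie in an arc `I`.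
-/

section Averaging

variable {X ι : Type*} [MeasurableSpace X] {μ : Measure X} [Fintype ι]

open Classical in
theorem card_mul_measure_inter_le_s11 {f : ι → X → X} (hf : ∀ i, MeasurePreserving (f i) μ μ)
    {s t : Set X} (hs : MeasurableSet s) (ht : MeasurableSet t) (hfs : ∀ i, f i ⁻¹' s = s)
    {C : ℝ≥0∞} (hC : ∀ x, (Finset.card {i | f i x ∈ t} : ℝ≥0∞) ≤ C) :
    Fintype.card ι * μ (s ∩ t) ≤ C * μ s := by
  have hmeas (i : ι) : MeasurableSet (f i ⁻¹' t) := (hf i).measurable ht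
  have hshift (i : ι) : μ (s ∩ t) = ∫⁻ x in s, (f i ⁻¹' t).indicator 1 x ∂μ := by
    rw [lintegral_indicator_one (hmeas i), Measure.restrict_apply (hmeas i), Set.inter_comm,
      ← (hf i).measure_preimage (ht.inter hs).nullMeasurableSet, Set.preimage_inter, hfs]
  calc Fintype.card ι * μ (s ∩ t)
      = ∑ i, ∫⁻ x in s, (f i ⁻¹' t).indicator 1 x ∂μ := by
        simp only [← hshift, Finset.sum_const, Finset.card_univ, nsmul_eq_mul]
    _ = ∫⁻ x in s, ∑ i, (f i ⁻¹' t).indicator 1 x ∂μ :=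
        (lintegral_finsetSum _ fun i _ => measurable_one.indicator (hmeas i)).symm
    _ ≤ ∫⁻ _ in s, C ∂μ := by
        refine lintegral_mono fun x => ?_
        simpa only [Set.indicator_apply, Set.mem_preimage, Pi.one_apply, Finset.sum_boole]
          using hC x
    _ = C * μ s := setLIntegral_const s C

end Averaging

section Packing

variable {T : ℝ} [Fact (0 < T)]

theorem volume_addCircle_ball (c : AddCircle T) (δ : ℝ) :
    volume (Metric.ball c δ) = ENNReal.ofReal (min T (2 * δ)) := by
  rw [← measure_congr AddCircle.closedBall_ae_eq_ball, AddCircle.volume_closedBall]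

theorem volume_addCircle_ball_add_le (c : AddCircle T) (δ : ℝ) {ε : ℝ} (hε : 0 ≤ ε) :
    volume (Metric.ball c (δ + ε)) ≤ volume (Metric.ball c δ) + ENNReal.ofReal (2 * ε) := by
  rw [volume_addCircle_ball, volume_addCircle_ball]
  refine (ENNReal.ofReal_le_ofReal ?_).trans ENNReal.ofReal_add_le
  rw [← min_add_add_right]
  exact min_le_min (by linarith) (by linarith)

theorem card_mul_le_volume_addCircle_ball_add {ι : Type*} {s : Finset ι} {x : ι → AddCircle T}
    {c : AddCircle T} {δ η : ℝ} (hη : 0 ≤ η) (hηT : η ≤ T)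
    (hx : ∀ i ∈ s, x i ∈ Metric.ball c δ)
    (hsep : (s : Set ι).Pairwise fun i j => η ≤ dist (x i) (x j)) :
    s.card * ENNReal.ofReal η ≤ volume (Metric.ball c δ) + ENNReal.ofReal η := by
  have hdisj : (s : Set ι).PairwiseDisjoint fun i => Metric.ball (x i) (η / 2) :=
    fun i hi j hj hij => Metric.ball_disjoint_ball <| by
      simpa only [add_halves] using hsep hi hj hij
  have hsub : ⋃ i ∈ s, Metric.ball (x i) (η / 2) ⊆ Metric.ball c (δ + η / 2) :=
    Set.iUnion₂_subset fun i hi => Metric.ball_subset_ball' <| by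
      linarith [Metric.mem_ball.1 (hx i hi)]
  calc s.card * ENNReal.ofReal η
      = ∑ i ∈ s, volume (Metric.ball (x i) (η / 2)) := by
        simp only [volume_addCircle_ball, mul_div_cancel₀ η two_ne_zero, min_eq_right hηT,
          Finset.sum_const, nsmul_eq_mul]
    _ = volume (⋃ i ∈ s, Metric.ball (x i) (η / 2)) :=
        (measure_biUnion_finset hdisj fun _ _ => Metric.isOpen_ball.measurableSet).symm
    _ ≤ volume (Metric.ball c (δ + η / 2)) := measure_mono hsub
    _ ≤ volume (Metric.ball c δ) + ENNReal.ofReal η := by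
        simpa only [mul_div_cancel₀ η two_ne_zero] using
          volume_addCircle_ball_add_le c δ (div_nonneg hη zero_le_two)

end Packing

section Torsion

variable {m : ℕ} [NeZero m]

theorem nsmul_toAddCircle (n : ℕ) (j : ZMod m) :
    n • ZMod.toAddCircle j = ZMod.toAddCircle ((n : ZMod m) * j) := by
  rw [← map_nsmul, nsmul_eq_mul]

theorem inv_le_norm_toAddCircle {j : ZMod m} (hj : j ≠ 0) :
    (m : ℝ)⁻¹ ≤ ‖ZMod.toAddCircle j‖ := by
  have hm : 0 < m := NeZero.pos m
  have htors : m • ZMod.toAddCircle j = 0 := by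
    rw [nsmul_toAddCircle, CharP.cast_eq_zero, zero_mul, map_zero]
  have hord : addOrderOf (ZMod.toAddCircle j) ≤ m := addOrderOf_le_of_nsmul_eq_zero hm htors
  rw [inv_le_iff_one_le_mul₀' (Nat.cast_pos.2 hm)]
  calc 1 ≤ addOrderOf (ZMod.toAddCircle j) • ‖ZMod.toAddCircle j‖ :=
        AddCircle.le_add_order_smul_norm_of_isOfFinAddOrder
          (isOfFinAddOrder_iff_nsmul_eq_zero.2 ⟨m, hm, htors⟩) (ZMod.toAddCircle_eq_zero.not.2 hj)
    _ ≤ m * ‖ZMod.toAddCircle j‖ := by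
        rw [nsmul_eq_mul]
        gcongr

open Classical in
theorem card_add_toAddCircle_mem_ball_le (y c : UnitAddCircle) (δ : ℝ) :
    (Finset.card {j : ZMod m | y + ZMod.toAddCircle j ∈ Metric.ball c δ} : ℝ≥0∞) ≤
      m * (volume (Metric.ball c δ) + (m : ℝ≥0∞)⁻¹) := by
  have hm : 0 < m := NeZero.pos m
  have hpack := card_mul_le_volume_addCircle_ball_add
    (s := {j : ZMod m | y + ZMod.toAddCircle j ∈ Metric.ball c δ})
    (x := fun j => y + ZMod.toAddCircle j) (η := (m : ℝ)⁻¹) (by positivity)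
    (inv_le_one_of_one_le₀ (Nat.one_le_cast.2 hm)) (fun j hj => (Finset.mem_filter.1 hj).2)
    (fun i _ j _ hij => by
      simpa only [dist_eq_norm, add_sub_add_left_eq_sub, ← map_sub] using
        inv_le_norm_toAddCircle (sub_ne_zero.2 hij))
  rw [ENNReal.ofReal_inv_of_pos (Nat.cast_pos.2 hm), ENNReal.ofReal_natCast,
    ← div_eq_mul_inv] at hpack
  rwa [mul_comm, ← ENNReal.div_le_iff (Nat.cast_ne_zero.2 hm.ne') (natCast_ne_top m)]

open Classical in
theorem card_nsmul_add_toAddCircle_mem {n : ℕ} (hmn : m.Coprime n) (x : UnitAddCircle)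
    (E : Set UnitAddCircle) :
    Finset.card {j : ZMod m | n • (x + ZMod.toAddCircle j) ∈ E} =
      Finset.card {j : ZMod m | n • x + ZMod.toAddCircle j ∈ E} := by
  refine Finset.card_bijective (fun j => n * j)
    (ZMod.unitOfCoprime n hmn.symm).mulLeft_bijective fun j => ?_
  simp only [Finset.mem_filter_univ, smul_add, nsmul_toAddCircle]

end Torsion

section Overlap

variable {E : Set UnitAddCircle}

theorem measurePreserving_nsmul_unitAddCircle {n : ℕ} (hn : n ≠ 0) :
    MeasurePreserving (fun x : UnitAddCircle => n • x) := by
  simpa only [natCast_zsmul] using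
    Measure.measurePreserving_zsmul (volume : Measure UnitAddCircle) (Nat.cast_ne_zero.2 hn)

theorem volume_preimage_nsmul {n : ℕ} (hn : n ≠ 0) (hE : MeasurableSet E) :
    volume ((n • · : UnitAddCircle → UnitAddCircle) ⁻¹' E) = volume E :=
  (measurePreserving_nsmul_unitAddCircle hn).measure_preimage hE.nullMeasurableSet

theorem volume_preimage_nsmul_inter_le_of_coprime {m n : ℕ} (hm : m ≠ 0) (hmn : m.Coprime n)
    (hE : MeasurableSet E) (c : UnitAddCircle) (δ : ℝ) :
    volume ((m • · : UnitAddCircle → UnitAddCircle) ⁻¹' E ∩ (n • ·) ⁻¹' Metric.ball c δ) ≤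
      (volume (Metric.ball c δ) + (m : ℝ≥0∞)⁻¹) * volume E := by
  classical
  have : NeZero m := ⟨hm⟩
  have hinv (j : ZMod m) : (· + ZMod.toAddCircle j) ⁻¹' ((m • ·) ⁻¹' E) =
      (m • · : UnitAddCircle → UnitAddCircle) ⁻¹' E := by
    ext x
    simp only [Set.mem_preimage, smul_add, nsmul_toAddCircle, CharP.cast_eq_zero, zero_mul,
      map_zero, add_zero]
  have havg := card_mul_measure_inter_le_s11
    (fun j : ZMod m => measurePreserving_add_right volume (ZMod.toAddCircle j))
    (s := (m • ·) ⁻¹' E) (t := (n • ·) ⁻¹' Metric.ball c δ)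
    (hE.preimage (by fun_prop)) (Metric.isOpen_ball.measurableSet.preimage (by fun_prop)) hinv
    (fun x => (congrArg Nat.cast (card_nsmul_add_toAddCircle_mem hmn x _)).trans_le
      (card_add_toAddCircle_mem_ball_le (n • x) c δ))
  rw [ZMod.card, volume_preimage_nsmul hm hE, mul_assoc] at havg
  exact (ENNReal.mul_le_mul_iff_right (Nat.cast_ne_zero.2 hm) (natCast_ne_top m)).1 havg

theorem volume_preimage_nsmul_inter_le {q : ℕ} (hq : q ≠ 0) (r : ℕ) (hE : MeasurableSet E)
    (c : UnitAddCircle) (δ : ℝ) :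
    volume ((q • · : UnitAddCircle → UnitAddCircle) ⁻¹' E ∩ (r • ·) ⁻¹' Metric.ball c δ) ≤
      (volume (Metric.ball c δ) + q.gcd r / q) * volume E := by
  obtain ⟨d, m, n, hd, hmn, rfl, rfl⟩ := Nat.exists_coprime' (Nat.gcd_pos_of_pos_left r hq.bot_lt)
  have hgcd : ((m * d).gcd (n * d) : ℝ≥0∞) / (m * d : ℕ) = (m : ℝ≥0∞)⁻¹ := by
    rw [Nat.gcd_mul_right, hmn.gcd_eq_one, one_mul, Nat.cast_mul, ← one_div,
      ← ENNReal.mul_div_mul_right 1 (m : ℝ≥0∞) (Nat.cast_ne_zero.2 hd.ne') (natCast_ne_top d),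
      one_mul]
  have hfactor (k : ℕ) (F : Set UnitAddCircle) :
      ((k * d) • ·) ⁻¹' F = (d • · : UnitAddCircle → UnitAddCircle) ⁻¹' ((k • ·) ⁻¹' F) := by
    simp only [mul_smul, Set.preimage_preimage]
  have hmeas : MeasurableSet
      ((m • · : UnitAddCircle → UnitAddCircle) ⁻¹' E ∩ (n • ·) ⁻¹' Metric.ball c δ) :=
    (hE.preimage (by fun_prop)).inter (Metric.isOpen_ball.measurableSet.preimage (by fun_prop))
  rw [hgcd, hfactor, hfactor, ← Set.preimage_inter, volume_preimage_nsmul hd.ne' hmeas]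
  exact volume_preimage_nsmul_inter_le_of_coprime (left_ne_zero_of_mul hq) hmn hE c δ

end Overlap

section UnitInterval

theorem distNearestInt_eq_norm (x : ℝ) : distNearestInt x = ‖(x : UnitAddCircle)‖ :=
  UnitAddCircle.norm_eq.symm

theorem volume_Icc_inter_preimage_coe {E : Set UnitAddCircle} (hE : MeasurableSet E) :
    volume (Set.Icc (0 : ℝ) 1 ∩ (↑) ⁻¹' E) = volume E := by
  rw [AddCircle.add_projection_respects_measure 1 0 hE, zero_add, Set.inter_comm]
  exact measure_congr ((ae_eq_refl _).inter Ioc_ae_eq_Icc.symm)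

theorem setOf_distNearestInt_lt (n : ℕ) (γ δ : ℝ) :
    {α ∈ Set.Icc (0 : ℝ) 1 | distNearestInt (n * α - γ) < δ} = Set.Icc 0 1 ∩
      (↑) ⁻¹' ((n • · : UnitAddCircle → UnitAddCircle) ⁻¹' Metric.ball γ δ) := by
  ext α
  simp only [distNearestInt_eq_norm, Set.mem_ofPred_eq, Set.mem_inter_iff, Set.mem_preimage,
    Metric.mem_ball, dist_eq_norm, ← nsmul_eq_mul, AddCircle.coe_sub, AddCircle.coe_nsmul]

end UnitInterval

theorem stmt11_general {q r : ℕ} (hq : q ≠ 0) (hr : r ≠ 0) (γ γ' δ δ' : ℝ) :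
    volume ({α ∈ Set.Icc (0 : ℝ) 1 | distNearestInt (q * α - γ) < δ} ∩
        {α ∈ Set.Icc (0 : ℝ) 1 | distNearestInt (r * α - γ') < δ'}) ≤
      volume {α ∈ Set.Icc (0 : ℝ) 1 | distNearestInt (q * α - γ) < δ} *
          volume {α ∈ Set.Icc (0 : ℝ) 1 | distNearestInt (r * α - γ') < δ'} +
        (q.gcd r : ℝ≥0∞) / q *
          volume {α ∈ Set.Icc (0 : ℝ) 1 | distNearestInt (q * α - γ) < δ} := by
  have hball (c : UnitAddCircle) (ε : ℝ) : MeasurableSet (Metric.ball c ε) :=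
    Metric.isOpen_ball.measurableSet
  have hpre (n : ℕ) (c : UnitAddCircle) (ε : ℝ) :
      MeasurableSet ((n • · : UnitAddCircle → UnitAddCircle) ⁻¹' Metric.ball c ε) :=
    (hball c ε).preimage (by fun_prop)
  simp only [setOf_distNearestInt_lt]
  rw [← Set.inter_inter_distrib_left, ← Set.preimage_inter,
    volume_Icc_inter_preimage_coe ((hpre q γ δ).inter (hpre r γ' δ')),
    volume_Icc_inter_preimage_coe (hpre q γ δ), volume_Icc_inter_preimage_coe (hpre r γ' δ'),
    volume_preimage_nsmul hq (hball γ δ), volume_preimage_nsmul hr (hball γ' δ'),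
    mul_comm (volume (Metric.ball (γ : UnitAddCircle) δ)), ← add_mul]
  exact volume_preimage_nsmul_inter_le hq r (hball γ δ) γ' δ'

theorem stmt11 (γ : ℕ → ℝ) (ψ : ℕ → ℝ) (hψ : ∀ q, ψ q ∈ Set.Icc (0:ℝ) (1/2))
    (A : ℕ → Set ℝ)
    (hA : ∀ q, A q = {α ∈ Set.Icc (0:ℝ) 1 | distNearestInt (q * α - γ q) < ψ q})
    (q r : ℕ) (hr : 1 ≤ r) (hrq : r < q) :
    volume (A q ∩ A r) ≤
      2 * volume (A q) * volume (A r) +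
        ((Nat.gcd q r : ℝ≥0∞) / (q : ℝ≥0∞)) * volume (A q) := by
  rw [hA q, hA r, mul_assoc, two_mul]
  exact (stmt11_general (by lia) (by lia) _ _ _ _).trans (by gcongr; exact le_self_add)
end
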